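/- Let k be a field, 1 ≤ d < m integers, S = k[X_1, …, X_m, V, A_1, …, A_d], a = (X_i | 1 ≤ i ≤ m−1)^2 + (X_m^2) + (X_i V | 1 ≤ i ≤ m) + (V^2 − Σ_{i=1}^d A_i X_i), R = S/a, M = R_+, and let x_i, v, a_j denote the images of X_i, V, A_j in R and Q = (a_1, …, a_d)R. Then Q : M = Q + (x_i x_m | 1 ≤ i ≤ m−1) + (v). -/

import Mathlib

set_option synthInstance.maxHeartbeats 1000000
set_option maxHeartbeats 1000000

noncomputable section

open MvPolynomial

/-- The variables of `S = k[X₁,…,X_m, V, A₁,…,A_d]`. -/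
abbrev PSVar (d m : ℕ) : Type := Fin m ⊕ Unit ⊕ Fin d

/-- The polynomial ring `S = k[X₁,…,X_m, V, A₁,…,A_d]` (graded with all variables of
degree one). -/
abbrev PS (k : Type*) [Field k] (d m : ℕ) := MvPolynomial (PSVar d m) k

/-- The variable `X_{i+1}` (`0`-indexed: `i = 0, …, m-1`), with junk value `0` out of
range. -/
def pX (k : Type*) [Field k] (d m : ℕ) (i : ℕ) : PS k d m :=
  if h : i < m then X (Sum.inl ⟨i, h⟩) else 0

/-- The variable `V`. -/
def pV (k : Type*) [Field k] (d m : ℕ) : PS k d m := X (Sum.inr (Sum.inl ()))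

/-- The variable `A_{j+1}` (`0`-indexed: `j = 0, …, d-1`), with junk value `0` out of
range. -/
def pA (k : Type*) [Field k] (d m : ℕ) (j : ℕ) : PS k d m :=
  if h : j < d then X (Sum.inr (Sum.inr ⟨j, h⟩)) else 0

/-- The ideal `a = (Xᵢ ∣ 1 ≤ i ≤ m-1)² + (X_m²) + (XᵢV ∣ 1 ≤ i ≤ m) + (V² - Σⱼ AⱼXⱼ)`. -/
def aId (k : Type*) [Field k] (d m : ℕ) : Ideal (PS k d m) :=
  (Ideal.span {f | ∃ i, i < m - 1 ∧ f = pX k d m i}) ^ 2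
    ⊔ Ideal.span {pX k d m (m - 1) ^ 2}
    ⊔ Ideal.span {f | ∃ i, i < m ∧ f = pX k d m i * pV k d m}
    ⊔ Ideal.span {pV k d m ^ 2 - ∑ j ∈ Finset.range d, pA k d m j * pX k d m j}

/-- `R = S/a`. -/
abbrev Rq (k : Type*) [Field k] (d m : ℕ) := PS k d m ⧸ aId k d m

lemma constantCoeff_pX (k : Type*) [Field k] (d m i : ℕ) :
    constantCoeff (pX k d m i) = 0 := by
  unfold pX; split <;> simp

lemma constantCoeff_pA (k : Type*) [Field k] (d m j : ℕ) :
    constantCoeff (pA k d m j) = 0 := by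
  unfold pA; split <;> simp

lemma constantCoeff_pV (k : Type*) [Field k] (d m : ℕ) :
    constantCoeff (pV k d m) = 0 := by
  unfold pV; simp

lemma aId_le_ker (k : Type*) [Field k] (d m : ℕ) :
    aId k d m ≤ RingHom.ker (eval (fun _ => (0 : k))) := by
  unfold aId
  refine sup_le (sup_le (sup_le ?_ ?_) ?_) ?_
  · refine le_trans (Ideal.pow_le_self two_ne_zero) (Ideal.span_le.mpr ?_)
    rintro f ⟨i, -, rfl⟩
    simp [RingHom.mem_ker, constantCoeff_pX]
  · refine Ideal.span_le.mpr ?_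
    rintro f rfl
    simp [RingHom.mem_ker, constantCoeff_pX]
  · refine Ideal.span_le.mpr ?_
    rintro f ⟨i, -, rfl⟩
    simp [RingHom.mem_ker, constantCoeff_pX]
  · refine Ideal.span_le.mpr ?_
    rintro f rfl
    simp [RingHom.mem_ker, constantCoeff_pV, constantCoeff_pA]

/-- The augmentation `R = S/a → k` (evaluation of all the degree-one variables at `0`). -/
def augmap (k : Type*) [Field k] (d m : ℕ) : Rq k d m →+* k :=
  Ideal.Quotient.lift (aId k d m) (eval (fun _ => (0 : k)))
    (fun _ ha => aId_le_ker k d m ha)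

/-- The irrelevant maximal ideal `M = R₊` of `R`, i.e. the ideal of elements with zero
constant term (the kernel of the augmentation). -/
def Mq (k : Type*) [Field k] (d m : ℕ) : Ideal (Rq k d m) := RingHom.ker (augmap k d m)

instance (k : Type*) [Field k] (d m : ℕ) : (Mq k d m).IsMaximal :=
  RingHom.ker_isMaximal_of_surjective _
    (fun c => ⟨Ideal.Quotient.mk _ (C c), by simp [augmap]⟩)

instance (k : Type*) [Field k] (d m : ℕ) : (Mq k d m).IsPrime :=
  (inferInstance : (Mq k d m).IsMaximal).isPrime

/-- `B = R_M`, the localization of `R` at the irrelevant maximal ideal. -/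
abbrev Bloc (k : Type*) [Field k] (d m : ℕ) := Localization.AtPrime (Mq k d m)

/-- The parameter ideal `Q = (a₁, …, a_d)` of `R` generated by the images of the `Aⱼ`. -/
def Qr (k : Type*) [Field k] (d m : ℕ) : Ideal (Rq k d m) :=
  Ideal.span {f | ∃ j, j < d ∧ f = Ideal.Quotient.mk (aId k d m) (pA k d m j)}

/-- The parameter ideal `q = QB` of `B`. -/
def qB (k : Type*) [Field k] (d m : ℕ) : Ideal (Bloc k d m) :=
  Ideal.map (algebraMap (Rq k d m) (Bloc k d m)) (Qr k d m)

end

open MvPolynomial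

namespace ColonAux

variable (k : Type*) [Field k] (d m : ℕ)

/-- The right-hand side ideal. -/
noncomputable def J : Ideal (Rq k d m) :=
  Qr k d m
        ⊔ Ideal.span {f | ∃ i, i < m - 1 ∧
            f = Ideal.Quotient.mk (aId k d m) (pX k d m i * pX k d m (m - 1))}
        ⊔ Ideal.span {Ideal.Quotient.mk (aId k d m) (pV k d m)}

lemma mk_zero_of_mem {p : PS k d m} (h : p ∈ aId k d m) :
    Ideal.Quotient.mk (aId k d m) p = 0 := Ideal.Quotient.eq_zero_iff_mem.mpr h

lemma XX_mem (i j : ℕ) (hi : i < m - 1) (hj : j < m - 1) :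
    pX k d m i * pX k d m j ∈ aId k d m := by
  unfold aId
  refine Ideal.mem_sup_left (Ideal.mem_sup_left (Ideal.mem_sup_left ?_))
  rw [pow_two]
  exact Ideal.mul_mem_mul (Ideal.subset_span ⟨i, hi, rfl⟩) (Ideal.subset_span ⟨j, hj, rfl⟩)

lemma XmXm_mem : pX k d m (m - 1) * pX k d m (m - 1) ∈ aId k d m := by
  unfold aId
  refine Ideal.mem_sup_left (Ideal.mem_sup_left (Ideal.mem_sup_right ?_))
  rw [← pow_two]
  exact Ideal.subset_span rfl

lemma XV_mem (i : ℕ) (hi : i < m) : pX k d m i * pV k d m ∈ aId k d m := by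
  unfold aId
  exact Ideal.mem_sup_left (Ideal.mem_sup_right (Ideal.subset_span ⟨i, hi, rfl⟩))

lemma A_mem (j : ℕ) (hj : j < d) : Ideal.Quotient.mk (aId k d m) (pA k d m j) ∈ Qr k d m :=
  Ideal.subset_span ⟨j, hj, rfl⟩

lemma VV_mem : Ideal.Quotient.mk (aId k d m) (pV k d m * pV k d m) ∈ Qr k d m := by
  have h : pV k d m ^ 2 - ∑ j ∈ Finset.range d, pA k d m j * pX k d m j ∈ aId k d m := by
    unfold aId
    exact Ideal.mem_sup_right (Ideal.subset_span rfl)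
  have h' := mk_zero_of_mem k d m h
  rw [map_sub, sub_eq_zero] at h'
  rw [← pow_two, h', map_sum]
  refine Ideal.sum_mem _ fun j hj => ?_
  rw [map_mul]
  exact Ideal.mul_mem_right _ _ (A_mem k d m j (Finset.mem_range.mp hj))

lemma pX_fin (i : Fin m) : pX k d m i = X (Sum.inl i) := by
  simp [pX]

lemma pA_fin (i : Fin d) : pA k d m i = X (Sum.inr (Sum.inr i)) := by
  simp [pA]

lemma V_mem_J : Ideal.Quotient.mk (aId k d m) (pV k d m) ∈ J k d m :=
  Ideal.mem_sup_right (Ideal.subset_span rfl)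

lemma Q_le_J : Qr k d m ≤ J k d m := le_sup_left.trans le_sup_left

lemma XX_mem_J (i j : ℕ) (hi : i < m) (hj : j < m) :
    Ideal.Quotient.mk (aId k d m) (pX k d m i * pX k d m j) ∈ J k d m := by
  by_cases hi' : i < m - 1
  · by_cases hj' : j < m - 1
    · rw [mk_zero_of_mem k d m (XX_mem k d m i j hi' hj')]; exact zero_mem _
    · obtain rfl : j = m - 1 := by omega
      exact Ideal.mem_sup_left (Ideal.mem_sup_right (Ideal.subset_span ⟨i, hi', rfl⟩))
  · obtain rfl : i = m - 1 := by omega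
    by_cases hj' : j < m - 1
    · rw [mul_comm]
      exact Ideal.mem_sup_left (Ideal.mem_sup_right (Ideal.subset_span ⟨j, hj', rfl⟩))
    · obtain rfl : j = m - 1 := by omega
      rw [mk_zero_of_mem k d m (XmXm_mem k d m)]; exact zero_mem _

lemma sub_const_mem (I : Ideal (Rq k d m))
    (hI : ∀ v, Ideal.Quotient.mk (aId k d m) (X v) ∈ I) (p : PS k d m) :
    Ideal.Quotient.mk (aId k d m) (p - C (eval (fun _ => (0 : k)) p)) ∈ I := by
  induction p using MvPolynomial.induction_on with
  | C a => simp
  | add p q hp hq =>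
    have := I.add_mem hp hq
    rw [← map_add] at this
    convert this using 2
    simp only [map_add]; ring
  | mul_X p n hp =>
    simp only [map_mul, eval_X, mul_zero, map_zero, sub_zero]
    exact Ideal.mul_mem_left _ _ (hI n)

lemma Mq_le (I : Ideal (Rq k d m))
    (hI : ∀ v, Ideal.Quotient.mk (aId k d m) (X v) ∈ I) : Mq k d m ≤ I := by
  intro f hf
  obtain ⟨p, rfl⟩ := Ideal.Quotient.mk_surjective f
  have hp : eval (fun _ => (0 : k)) p = 0 := by
    simpa [Mq, RingHom.mem_ker, augmap] using hf
  have h := sub_const_mem k d m I hI p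
  rw [hp, map_zero, sub_zero] at h
  exact h

lemma X_mem_Mq (v) : Ideal.Quotient.mk (aId k d m) (X v) ∈ Mq k d m := by
  simp [Mq, RingHom.mem_ker, augmap]

/-- multiplication colon as an ideal. -/
lemma mul_mem_Q (g : Rq k d m)
    (hX : ∀ i, i < m → g * Ideal.Quotient.mk (aId k d m) (pX k d m i) ∈ Qr k d m)
    (hV : g * Ideal.Quotient.mk (aId k d m) (pV k d m) ∈ Qr k d m)
    (f : Rq k d m) (hf : f ∈ Mq k d m) : g * f ∈ Qr k d m := by
  have h : Mq k d m ≤ Submodule.comap (LinearMap.mulLeft (Rq k d m) g) (Qr k d m) := by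
    refine Mq_le k d m _ ?_
    rintro (i | ⟨⟨⟩⟩ | j)
    · have := hX i i.2
      rw [pX_fin] at this
      exact this
    · exact hV
    · have := A_mem k d m j j.2
      rw [pA_fin] at this
      exact Ideal.mul_mem_left _ _ this
  exact h hf

lemma mem_colon' (g : Rq k d m) :
    g ∈ (Qr k d m).colon (Mq k d m) ↔ ∀ f ∈ Mq k d m, g * f ∈ Qr k d m := by
  simp [Submodule.mem_colon]

lemma J_le : J k d m ≤ (Qr k d m).colon (Mq k d m) := by
  refine sup_le (sup_le ?_ ?_) ?_
  · intro g hg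
    rw [mem_colon']
    exact fun f _ => Ideal.mul_mem_right _ _ hg
  · rw [Ideal.span_le]
    rintro _ ⟨i, hi, rfl⟩
    rw [SetLike.mem_coe, mem_colon']
    refine mul_mem_Q k d m _ ?_ ?_
    · intro j hj
      rw [← map_mul]
      suffices h : pX k d m i * pX k d m (m - 1) * pX k d m j ∈ aId k d m by
        rw [mk_zero_of_mem k d m h]; exact zero_mem _
      by_cases hj' : j < m - 1
      · rw [mul_right_comm]
        exact Ideal.mul_mem_right _ _ (XX_mem k d m i j hi hj')
      · obtain rfl : j = m - 1 := by omega
        rw [mul_assoc]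
        exact Ideal.mul_mem_left _ _ (XmXm_mem k d m)
    · rw [← map_mul, mk_zero_of_mem k d m]
      · exact zero_mem _
      · rw [mul_assoc]
        exact Ideal.mul_mem_left _ _ (XV_mem k d m _ (by omega))
  · rw [Ideal.span_le, Set.singleton_subset_iff, SetLike.mem_coe, mem_colon']
    refine mul_mem_Q k d m _ ?_ ?_
    · intro j hj
      rw [← map_mul, mul_comm, mk_zero_of_mem k d m (XV_mem k d m j hj)]
      exact zero_mem _
    · rw [← map_mul]; exact VV_mem k d m

lemma decomp (p : PS k d m) : ∃ (c : k) (e : Fin m → k),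
    Ideal.Quotient.mk (aId k d m) (p - (C c + ∑ i, C (e i) * X (Sum.inl i))) ∈ J k d m := by
  induction p using MvPolynomial.induction_on with
  | C a => exact ⟨a, 0, by simp⟩
  | add p q hp hq =>
    obtain ⟨c, e, h⟩ := hp
    obtain ⟨c', e', h'⟩ := hq
    refine ⟨c + c', e + e', ?_⟩
    have := (J k d m).add_mem h h'
    rw [← map_add] at this
    convert this using 2
    simp only [map_add, Pi.add_apply, add_mul, Finset.sum_add_distrib]; ring
  | mul_X p n hp =>
    obtain ⟨c, e, h⟩ := hp
    rcases n with j | ⟨⟨⟩⟩ | j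
    · refine ⟨0, fun i => if i = j then c else 0, ?_⟩
      have h1 := (J k d m).mul_mem_right (Ideal.Quotient.mk (aId k d m) (X (Sum.inl j))) h
      have h2 : Ideal.Quotient.mk (aId k d m)
          (∑ i, C (e i) * (X (Sum.inl i) * X (Sum.inl j))) ∈ J k d m := by
        rw [map_sum]
        refine Ideal.sum_mem _ fun i _ => ?_
        rw [map_mul]
        refine Ideal.mul_mem_left _ _ ?_
        rw [← pX_fin, ← pX_fin]
        exact XX_mem_J k d m i j i.2 j.2
      have := (J k d m).add_mem h1 h2
      rw [← map_mul, ← map_add] at this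
      convert this using 2
      have h3 : ∑ i, C (if i = j then c else 0) * X (Sum.inl i)
          = (C c * X (Sum.inl j) : PS k d m) := by
        rw [Finset.sum_eq_single j] <;> simp +contextual
      simp only [h3, ← mul_assoc, ← Finset.sum_mul, map_zero]
      ring
    · refine ⟨0, 0, ?_⟩
      have := (J k d m).mul_mem_left (Ideal.Quotient.mk (aId k d m) p) (V_mem_J k d m)
      simpa [pV] using this
    · refine ⟨0, 0, ?_⟩
      have := (J k d m).mul_mem_left (Ideal.Quotient.mk (aId k d m) p)
        (Q_le_J k d m (A_mem k d m j j.2))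
      simpa [pA_fin] using this

/-- Target ring `k[s,t]/(s²,t²)`. -/
abbrev DD := DualNumber (DualNumber k)

/-- The element `s`. -/
noncomputable def ss : DD k := TrivSqZeroExt.inl DualNumber.eps
/-- The element `t`. -/
noncomputable def tt : DD k := DualNumber.eps

lemma ss_sq : ss k * ss k = 0 := by
  rw [ss, ← TrivSqZeroExt.inl_mul]; simp

lemma tt_sq : tt k * tt k = 0 := by
  simp [tt]

/-- Values of the variables. -/
noncomputable def vals (i : ℕ) : PSVar d m → DD k
  | Sum.inl j => if (j : ℕ) = m - 1 then tt k else if (j : ℕ) = i then ss k else 0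
  | Sum.inr _ => 0

/-- The test homomorphism on the polynomial ring. -/
noncomputable def phi (i : ℕ) : PS k d m →ₐ[k] DD k := aeval (vals k d m i)

lemma phi_X (i j : ℕ) (hj : j < m) : phi k d m i (pX k d m j) =
    if j = m - 1 then tt k else if j = i then ss k else 0 := by
  simp [phi, pX, hj, vals]

lemma phi_V (i : ℕ) : phi k d m i (pV k d m) = 0 := by
  simp [phi, pV, vals]

lemma phi_A (i j : ℕ) : phi k d m i (pA k d m j) = 0 := by
  unfold pA; split <;> simp [phi, vals]

lemma phi_a (i : ℕ) (hm : 0 < m) : ∀ p ∈ aId k d m, phi k d m i p = 0 := by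
  suffices h : aId k d m ≤ RingHom.ker (phi k d m i) from fun p hp => h hp
  unfold aId
  refine sup_le (sup_le (sup_le ?_ ?_) ?_) ?_
  · rw [pow_two, Ideal.span_mul_span', Ideal.span_le]
    rintro f ⟨_, ⟨a, ha, rfl⟩, _, ⟨b, hb, rfl⟩, rfl⟩
    simp only [SetLike.mem_coe, RingHom.mem_ker, map_mul]
    rw [phi_X _ _ _ _ _ (by omega), phi_X _ _ _ _ _ (by omega), if_neg (ne_of_lt ha),
      if_neg (ne_of_lt hb)]
    split_ifs <;> simp [ss_sq]
  · rw [Ideal.span_le]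
    rintro f rfl
    simp only [SetLike.mem_coe, RingHom.mem_ker, map_pow]
    rw [phi_X _ _ _ _ _ (by omega), if_pos rfl, pow_two, tt_sq]
  · rw [Ideal.span_le]
    rintro f ⟨i, -, rfl⟩
    simp [RingHom.mem_ker, phi_V]
  · rw [Ideal.span_le]
    rintro f rfl
    simp [RingHom.mem_ker, phi_V, phi_A]

lemma phi_Q (i : ℕ) (hm : 0 < m) (p : PS k d m)
    (hp : Ideal.Quotient.mk (aId k d m) p ∈ Qr k d m) : phi k d m i p = 0 := by
  let psi : Rq k d m →+* DD k := Ideal.Quotient.lift (aId k d m)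
    (phi k d m i : PS k d m →+* DD k) (phi_a k d m i hm)
  have h : Qr k d m ≤ RingHom.ker psi := by
    unfold Qr
    rw [Ideal.span_le]
    rintro _ ⟨j, -, rfl⟩
    exact phi_A k d m i j
  exact h hp

lemma coeffs_t (a b c : k) (h : (algebraMap k (DD k) a + algebraMap k (DD k) b * ss k
    + algebraMap k (DD k) c * tt k) * tt k = 0) : a = 0 ∧ b = 0 := by
  have h1 := congrArg (fun z => TrivSqZeroExt.fst (TrivSqZeroExt.snd z)) h
  have h2 := congrArg (fun z => TrivSqZeroExt.snd (TrivSqZeroExt.snd z)) h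
  simp [ss, tt, TrivSqZeroExt.algebraMap_eq_inl'] at h1 h2
  exact ⟨h1, h2⟩

lemma coeffs_s (a b c : k) (h : (algebraMap k (DD k) a + algebraMap k (DD k) b * ss k
    + algebraMap k (DD k) c * tt k) * ss k = 0) : c = 0 := by
  have h2 := congrArg (fun z => TrivSqZeroExt.snd (TrivSqZeroExt.snd z)) h
  simpa [ss, tt, TrivSqZeroExt.algebraMap_eq_inl'] using h2

lemma phi_lin (l : ℕ) (hl : l < m - 1) (c : k) (e : Fin m → k) :
    phi k d m l (C c + ∑ i, C (e i) * X (Sum.inl i)) =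
      algebraMap k (DD k) c + algebraMap k (DD k) (e ⟨l, by omega⟩) * ss k
        + algebraMap k (DD k) (e ⟨m - 1, by omega⟩) * tt k := by
  have hC : ∀ a : k, phi k d m l (C a) = algebraMap k (DD k) a := fun a => by
    simp [phi]
  rw [map_add, map_sum, hC, add_assoc]
  congr 1
  simp only [map_mul, hC, ← pX_fin]
  rw [Finset.sum_eq_add (⟨l, by omega⟩ : Fin m) ⟨m - 1, by omega⟩]
  · rw [phi_X _ _ _ _ _ (by omega), phi_X _ _ _ _ _ (by omega), if_neg (by simp; omega),
      if_pos (by simp), if_pos (by simp)]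
  · intro h; simp at h; omega
  · rintro j - ⟨h1, h2⟩
    rw [phi_X _ _ _ _ _ j.2, if_neg (fun h => h2 (Fin.ext h)), if_neg (fun h => h1 (Fin.ext h)),
      mul_zero]
  · simp
  · simp

end ColonAux

/-- **Goto–Sakurai, proof of Lemma (4.1) / Proposition (4.7).**  In `R = S/a` one has
`Q : M = Q + (xᵢx_m ∣ 1 ≤ i ≤ m-1) + (v)`. -/
theorem colon_Q_M_of_example
    (k : Type*) [Field k] (d m : ℕ) (h1 : 1 ≤ d) (h2 : d < m) :
    (Qr k d m).colon (Mq k d m) =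
      Qr k d m
        ⊔ Ideal.span {f | ∃ i, i < m - 1 ∧
            f = Ideal.Quotient.mk (aId k d m) (pX k d m i * pX k d m (m - 1))}
        ⊔ Ideal.span {Ideal.Quotient.mk (aId k d m) (pV k d m)} := by
  refine le_antisymm ?_ (ColonAux.J_le k d m)
  intro f hf
  obtain ⟨p, rfl⟩ := Ideal.Quotient.mk_surjective f
  obtain ⟨c, e, hJ⟩ := ColonAux.decomp k d m p
  have hg := Ideal.sub_mem _ hf (ColonAux.J_le k d m hJ)
  rw [← map_sub, sub_sub_cancel, ColonAux.mem_colon'] at hg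
  have key : ∀ l, l < m - 1 → ∀ j, j < m →
      (algebraMap k (ColonAux.DD k) c
        + algebraMap k (ColonAux.DD k) (if h : l < m then e ⟨l, h⟩ else 0) * ColonAux.ss k
        + algebraMap k (ColonAux.DD k) (e ⟨m - 1, by omega⟩) * ColonAux.tt k)
        * ColonAux.phi k d m l (pX k d m j) = 0 := by
    intro l hl j hj
    have h := hg _ (ColonAux.X_mem_Mq k d m (Sum.inl ⟨j, hj⟩))
    rw [← map_mul, ← ColonAux.pX_fin] at h
    have h' := ColonAux.phi_Q k d m l (by omega) _ h
    rw [map_mul, ColonAux.phi_lin k d m l hl] at h'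
    rw [dif_pos (by omega)]
    exact h'
  have ht : ∀ l, l < m - 1 → c = 0 ∧ (if h : l < m then e ⟨l, h⟩ else 0) = 0 := by
    intro l hl
    have h := key l hl (m - 1) (by omega)
    rw [ColonAux.phi_X _ _ _ _ _ (by omega), if_pos rfl] at h
    exact ColonAux.coeffs_t k _ _ _ h
  have hlast : e ⟨m - 1, by omega⟩ = 0 := by
    have h := key 0 (by omega) 0 (by omega)
    rw [ColonAux.phi_X _ _ _ _ _ (by omega), if_neg (by omega), if_pos rfl] at h
    exact ColonAux.coeffs_s k _ _ _ h
  have hc : c = 0 := (ht 0 (by omega)).1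
  have he : ∀ i, e i = 0 := by
    rintro ⟨i, hi⟩
    by_cases h : i < m - 1
    · simpa [hi] using (ht i h).2
    · obtain rfl : i = m - 1 := by omega
      exact hlast
  have hz : (C c + ∑ i, C (e i) * X (Sum.inl i) : PS k d m) = 0 := by simp [hc, he]
  rw [hz, sub_zero] at hJ
  exact hJ
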